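/- Let X be a nonempty finite set and B ∈ Matrix X X ℂ a matrix all of whose entries are 0 or 1 such that the digraph Γ(B) is strongly connected and B has exactly d+1 distinct eigenvalues. Define ∂(x,y) as the least ℓ ≥ 0 with (B^ℓ) x y ≠ 0, let Δ = { (∂(x,y), ∂(y,x)) : x, y ∈ X }, and for each pair p ∈ Δ let C_p ∈ Matrix X X ℂ be the 0-1 matrix with (C_p) x y = 1 iff (∂(x,y), ∂(y,x)) = p. Assume: B is normal (B * Bᵀ = Bᵀ * B, noting B has real 0-1 entries); Δ has exactly d+1 elements; and for every ℓ ≥ 0 and all x, y, u, v ∈ X, if (∂(x,y), ∂(y,x)) = (∂(u,v), ∂(v,u)) then (B^ℓ) x y = (B^ℓ) u v. Then the family { C_p : p ∈ Δ } is a commutative d-class association scheme on X, i.e.: C_(0,0) = 1; ∑_{p ∈ Δ} C_p = J; for each p ∈ Δ, (C_p)ᵀ = C_q for some q ∈ Δ; each product C_p * C_q is a ℂ-linear combination of the C_r, r ∈ Δ; and C_p * C_q = C_q * C_p for all p, q ∈ Δ. Moreover, the ℂ-linear span of { C_p : p ∈ Δ } equals the ℂ-linear span of { B^0, B^1, …,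 B^d }. -/

import Mathlib

open Matrix Polynomial BigOperators

/-- The all-ones matrix `J`. -/
def allOnes (X : Type*) [Fintype X] : Matrix X X ℂ := Matrix.of fun _ _ => 1

/-- The distance `∂(x,y)` in the digraph `Γ(B)`: the least `ℓ ≥ 0` with
`(B^ℓ) x y ≠ 0`. -/
noncomputable def bdist {X : Type*} [Fintype X] [DecidableEq X]
    (B : Matrix X X ℂ) (x y : X) : ℕ :=
  sInf {ℓ : ℕ | (B ^ ℓ) x y ≠ 0}

/-- The two-sided distance pattern of a pair of vertices. -/
noncomputable def pat {X : Type*} [Fintype X] [DecidableEq X]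
    (B : Matrix X X ℂ) (x y : X) : ℕ × ℕ :=
  (bdist B x y, bdist B y x)

/-- The 0-1 matrix of the relation `R_p = {(x,y) : (∂(x,y), ∂(y,x)) = p}`. -/
noncomputable def patMatrix {X : Type*} [Fintype X] [DecidableEq X]
    (B : Matrix X X ℂ) (p : ℕ × ℕ) : Matrix X X ℂ :=
  Matrix.of fun x y => if pat B x y = p then 1 else 0

/-!
If the walk counts depend only on the distance pattern, every power of `B` lies in the span of the
`d + 1` relation matrices. A matrix with `d + 1` eigenvalues has minimal polynomial of degree at
least `d + 1`, so `B ^ 0, …, B ^ d` are linearly independent and already fill this span. The span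
is therefore the algebra `ℂ[B]`, which is closed under multiplication and commutative.
-/

section PowersInSubmodule

variable {R A : Type*} [CommSemiring R] [Semiring A] [Algebra R A] {a : A} {S : Submodule R A}

lemma span_range_pow_le {n : ℕ} (hS : ∀ i : ℕ, a ^ i ∈ S) :
    Submodule.span R (Set.range fun i : Fin n => a ^ (i : ℕ)) ≤ S :=
  Submodule.span_le.2 (Set.range_subset_iff.2 fun i => hS i)

lemma toSubmodule_adjoin_singleton_le (hS : ∀ i : ℕ, a ^ i ∈ S) :
    Subalgebra.toSubmodule (Algebra.adjoin R {a}) ≤ S := by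
  rw [Algebra.adjoin_eq_span, Submodule.span_le]
  intro b hb
  obtain ⟨i, rfl⟩ := Submonoid.mem_closure_singleton.1 hb
  exact hS i

end PowersInSubmodule

section MinimalPolynomial

variable {K A : Type*} [Field K] [Ring A] [Algebra K A]

lemma spectrum_subset_rootSet_minpoly {a : A} (ha : IsIntegral K a) :
    spectrum K a ⊆ (minpoly K a).rootSet K := by
  nontriviality A
  intro z hz
  have heval : (minpoly K a).eval z ∈ spectrum K (aeval a (minpoly K a)) :=
    spectrum.subset_polynomial_aeval a _ ⟨z, hz, rfl⟩
  rw [minpoly.aeval, spectrum.zero_eq, Set.mem_singleton_iff] at heval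
  rwa [mem_rootSet_of_ne (minpoly.ne_zero ha), coe_aeval_eq_eval]

lemma ncard_spectrum_le_natDegree_minpoly {a : A} (ha : IsIntegral K a) :
    (spectrum K a).ncard ≤ (minpoly K a).natDegree :=
  (Set.ncard_le_ncard (spectrum_subset_rootSet_minpoly ha) (rootSet_finite _ K)).trans
    (ncard_rootSet_le _ K)

variable {a : A} {S : Submodule K A}

lemma span_range_pow_eq_of_finrank_le {n : ℕ} [FiniteDimensional K S]
    (hS : ∀ i : ℕ, a ^ i ∈ S) (hn : n ≤ (minpoly K a).natDegree)
    (hfin : Module.finrank K S ≤ n) :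
    Submodule.span K (Set.range fun i : Fin n => a ^ (i : ℕ)) = S := by
  have hind : LinearIndependent K fun i : Fin n => a ^ (i : ℕ) :=
    (linearIndependent_pow a).comp (Fin.castLE hn) (Fin.castLE_injective hn)
  refine Submodule.eq_of_le_of_finrank_le (span_range_pow_le hS) ?_
  rwa [finrank_span_eq_card hind, Fintype.card_fin]

lemma toSubmodule_adjoin_singleton_eq_of_finrank_le [FiniteDimensional K S]
    (hS : ∀ i : ℕ, a ^ i ∈ S) (hfin : Module.finrank K S ≤ (minpoly K a).natDegree) :
    Subalgebra.toSubmodule (Algebra.adjoin K {a}) = S := by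
  refine (toSubmodule_adjoin_singleton_le hS).antisymm ?_
  rw [← span_range_pow_eq_of_finrank_le hS le_rfl hfin]
  exact span_range_pow_le fun i => pow_mem (Algebra.self_mem_adjoin_singleton K a) i

end MinimalPolynomial

section DistancePatterns

variable {X : Type*} [Fintype X] [DecidableEq X] (B : Matrix X X ℂ)

/-- The set `Δ` of two-sided distance patterns, which indexes the relations `R_p`. -/
noncomputable abbrev distancePatterns : Finset (ℕ × ℕ) :=
  Finset.image (fun q : X × X => pat B q.1 q.2) Finset.univ

/-- The linear span of the relation matrices `C_p`, `p ∈ Δ`: the Bose–Mesner algebra once these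
matrices form an association scheme. -/
noncomputable abbrev patSpan : Submodule ℂ (Matrix X X ℂ) :=
  Submodule.span ℂ (patMatrix B '' ↑(distancePatterns B))

lemma pat_mem_distancePatterns (x y : X) : pat B x y ∈ distancePatterns B :=
  Finset.mem_image_of_mem (fun q : X × X => pat B q.1 q.2) (Finset.mem_univ (x, y))

lemma swap_mem_distancePatterns {p : ℕ × ℕ} (hp : p ∈ distancePatterns B) :
    p.swap ∈ distancePatterns B := by
  obtain ⟨⟨x, y⟩, -, rfl⟩ := Finset.mem_image.1 hp
  exact pat_mem_distancePatterns B y x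

lemma transpose_patMatrix (p : ℕ × ℕ) : (patMatrix B p)ᵀ = patMatrix B p.swap := by
  ext x y
  have hswap : pat B y x = p ↔ pat B x y = p.swap := Prod.swap_inj.symm
  simp only [transpose_apply, patMatrix, of_apply, hswap]

lemma sum_smul_patMatrix (c : ℕ × ℕ → ℂ) :
    ∑ p ∈ distancePatterns B, c p • patMatrix B p = of fun x y => c (pat B x y) := by
  ext x y
  simp only [Matrix.sum_apply, Matrix.smul_apply, patMatrix, of_apply, smul_eq_mul, mul_ite,
    mul_one, mul_zero, Finset.sum_ite_eq, pat_mem_distancePatterns, if_true]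

lemma sum_patMatrix : ∑ p ∈ distancePatterns B, patMatrix B p = allOnes X := by
  simpa only [one_smul, allOnes] using sum_smul_patMatrix B fun _ => 1

lemma finrank_patSpan_le : Module.finrank ℂ (patSpan B) ≤ (distancePatterns B).card := by
  rw [patSpan, ← Finset.coe_image]
  exact (finrank_span_finset_le_card _).trans Finset.card_image_le

variable {B}

lemma mem_patSpan_of_pat_congr {M : Matrix X X ℂ}
    (hM : ∀ x y u v : X, pat B x y = pat B u v → M x y = M u v) : M ∈ patSpan B := by
  let c : ℕ × ℕ → ℂ := Function.extend (Function.uncurry (pat B)) (Function.uncurry M) 0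
  have hfactors : Function.FactorsThrough (Function.uncurry M) (Function.uncurry (pat B)) :=
    fun s t => hM s.1 s.2 t.1 t.2
  have hsum : ∑ p ∈ distancePatterns B, c p • patMatrix B p = M := by
    rw [sum_smul_patMatrix]
    ext x y
    exact hfactors.extend_apply 0 (x, y)
  rw [← hsum]
  exact Submodule.sum_smul_mem _ c fun p hp => Submodule.subset_span ⟨p, hp, rfl⟩

lemma bdist_eq_zero_iff {x y : X} (hxy : ∃ ℓ : ℕ, (B ^ ℓ) x y ≠ 0) :
    bdist B x y = 0 ↔ x = y := by
  have hne : {ℓ : ℕ | (B ^ ℓ) x y ≠ 0} ≠ ∅ := Set.Nonempty.ne_empty hxy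
  simp [bdist, Nat.sInf_eq_zero, hne, one_apply]

lemma patMatrix_zero_zero (hconn : ∀ x y : X, ∃ ℓ : ℕ, (B ^ ℓ) x y ≠ 0) :
    patMatrix B (0, 0) = 1 := by
  ext x y
  have hpat : pat B x y = (0, 0) ↔ x = y := by
    rw [pat, Prod.mk.injEq, bdist_eq_zero_iff (hconn x y), bdist_eq_zero_iff (hconn y x),
      eq_comm (a := y), and_self]
  simp only [patMatrix, of_apply, hpat, one_apply]

end DistancePatterns

theorem stmt_19_general {X : Type*} [Fintype X] [DecidableEq X] {d : ℕ} (B : Matrix X X ℂ)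
    (hconn : ∀ x y : X, ∃ ℓ : ℕ, (B ^ ℓ) x y ≠ 0)
    (hspec : (spectrum ℂ B).ncard = d + 1)
    (hΔ : (distancePatterns B).card = d + 1)
    (hwalk : ∀ (ℓ : ℕ) (x y u v : X), pat B x y = pat B u v → (B ^ ℓ) x y = (B ^ ℓ) u v) :
    patMatrix B (0, 0) = 1 ∧
    ∑ p ∈ distancePatterns B, patMatrix B p = allOnes X ∧
    (∀ p ∈ distancePatterns B, ∃ q ∈ distancePatterns B, (patMatrix B p)ᵀ = patMatrix B q) ∧
    (∀ p ∈ distancePatterns B, ∀ q ∈ distancePatterns B,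
      patMatrix B p * patMatrix B q ∈ patSpan B) ∧
    (∀ p ∈ distancePatterns B, ∀ q ∈ distancePatterns B,
      patMatrix B p * patMatrix B q = patMatrix B q * patMatrix B p) ∧
    patSpan B = Submodule.span ℂ (Set.range fun i : Fin (d + 1) => B ^ (i : ℕ)) := by
  have hpow (ℓ : ℕ) : B ^ ℓ ∈ patSpan B := mem_patSpan_of_pat_congr (hwalk ℓ)
  have hdeg : d + 1 ≤ (minpoly ℂ B).natDegree :=
    hspec.symm.trans_le (ncard_spectrum_le_natDegree_minpoly (Algebra.IsIntegral.isIntegral B))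
  have hfin : Module.finrank ℂ (patSpan B) ≤ d + 1 := (finrank_patSpan_le B).trans_eq hΔ
  have hadjoin : Subalgebra.toSubmodule (Algebra.adjoin ℂ {B}) = patSpan B :=
    toSubmodule_adjoin_singleton_eq_of_finrank_le hpow (hfin.trans hdeg)
  have hmem {p : ℕ × ℕ} (hp : p ∈ distancePatterns B) :
      patMatrix B p ∈ Algebra.adjoin ℂ {B} := by
    rw [← Subalgebra.mem_toSubmodule, hadjoin]
    exact Submodule.subset_span ⟨p, hp, rfl⟩
  have hcomm {p q : ℕ × ℕ} (hp : p ∈ distancePatterns B) (hq : q ∈ distancePatterns B) :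
      Commute (patMatrix B p) (patMatrix B q) :=
    Algebra.commute_of_mem_adjoin_singleton_of_commute (hmem hq)
      (Algebra.commute_of_mem_adjoin_self (hmem hp)).symm
  exact ⟨patMatrix_zero_zero hconn, sum_patMatrix B,
    fun p hp => ⟨p.swap, swap_mem_distancePatterns B hp, transpose_patMatrix B p⟩,
    fun p hp q hq => hadjoin.le ((Algebra.adjoin ℂ {B}).mul_mem (hmem hp) (hmem hq)),
    fun p hp q hq => hcomm hp hq, (span_range_pow_eq_of_finrank_le hpow hdeg hfin).symm⟩

/-- If `B` is a normal 0-1 matrix with a strongly connected digraph and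
exactly `d+1` distinct eigenvalues, the set `Δ` of two-sided distance
patterns has `d+1` elements, and the number of walks of any length `ℓ` from
`x` to `y` depends only on `(∂(x,y), ∂(y,x))`, then the relations
`R_p` (`p ∈ Δ`) form a commutative `d`-class association scheme whose
Bose–Mesner algebra is spanned by `B^0, …, B^d`. -/
theorem stmt_19 {X : Type*} [Fintype X] [DecidableEq X] [Nonempty X] {d : ℕ}
    (B : Matrix X X ℂ)
    (h01 : ∀ x y, B x y = 0 ∨ B x y = 1)
    (hconn : ∀ x y : X, ∃ ℓ : ℕ, (B ^ ℓ) x y ≠ 0)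
    (hspec : (spectrum ℂ B).ncard = d + 1)
    (hnormal : B * Bᵀ = Bᵀ * B)
    (hΔ : (Finset.image (fun q : X × X => pat B q.1 q.2) Finset.univ).card = d + 1)
    (hwalk : ∀ (ℓ : ℕ) (x y u v : X), pat B x y = pat B u v →
      (B ^ ℓ) x y = (B ^ ℓ) u v) :
    patMatrix B (0, 0) = 1 ∧
    (∑ p ∈ Finset.image (fun q : X × X => pat B q.1 q.2) Finset.univ,
        patMatrix B p) = allOnes X ∧
    (∀ p ∈ Finset.image (fun q : X × X => pat B q.1 q.2) Finset.univ,
      ∃ q ∈ Finset.image (fun q : X × X => pat B q.1 q.2) Finset.univ,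
        (patMatrix B p)ᵀ = patMatrix B q) ∧
    (∀ p ∈ Finset.image (fun q : X × X => pat B q.1 q.2) Finset.univ,
      ∀ q ∈ Finset.image (fun q : X × X => pat B q.1 q.2) Finset.univ,
        patMatrix B p * patMatrix B q ∈
          Submodule.span ℂ (patMatrix B ''
            ↑(Finset.image (fun q : X × X => pat B q.1 q.2) Finset.univ))) ∧
    (∀ p ∈ Finset.image (fun q : X × X => pat B q.1 q.2) Finset.univ,
      ∀ q ∈ Finset.image (fun q : X × X => pat B q.1 q.2) Finset.univ,
        patMatrix B p * patMatrix B q = patMatrix B q * patMatrix B p) ∧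
    Submodule.span ℂ (patMatrix B ''
        ↑(Finset.image (fun q : X × X => pat B q.1 q.2) Finset.univ)) =
      Submodule.span ℂ (Set.range fun i : Fin (d + 1) => B ^ (i : ℕ)) :=
  stmt_19_general B hconn hspec hΔ hwalk
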